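/- Let d ≥ 2, α ∈ (1,2), T > 0, and for 0 < t ≤ T let (P_t φ)(x) = ∫_{ℝ^d} φ(x + y) p_t(y) dy, where p_t(x) = (2π)^{−d} ∫_{ℝ^d} cos(⟨x,u⟩) e^{−tΨ(u)} du and Ψ(u) = ∫_{|y|≤1} (1 − cos(⟨u,y⟩)) |y|^{−(d+α)} dy. Then for every bounded measurable φ : ℝ^d → ℝ and every 0 < t ≤ T, P_t φ is twice continuously differentiable and there exists a constant C < ∞ (depending only on d, α, T) such that ‖D²(P_t φ)‖_∞ ≤ C ‖φ‖_∞ t^{−2/α}, where ‖D²(P_t φ)‖_∞ denotes the supremum over x ∈ ℝ^d of the norm of the Hessian matrix of P_t φ at x and ‖φ‖_∞ = sup_{x∈ℝ^d} |φ(x)|. -/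

import Mathlib

open MeasureTheory Metric
open scoped RealInnerProductSpace

/-- Characteristic exponent of the truncated `α`-stable process. -/
noncomputable def Psi (d : ℕ) (α : ℝ) (u : EuclideanSpace ℝ (Fin d)) : ℝ :=
  ∫ y in Metric.closedBall (0 : EuclideanSpace ℝ (Fin d)) 1,
    (1 - Real.cos ⟪u, y⟫) / ‖y‖ ^ ((d : ℝ) + α)

/-- Transition density of the truncated `α`-stable process, via Fourier inversion. -/
noncomputable def pdens (d : ℕ) (α : ℝ) (t : ℝ) (x : EuclideanSpace ℝ (Fin d)) : ℝ :=
  ((2 * Real.pi) ^ d)⁻¹ *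
    ∫ u : EuclideanSpace ℝ (Fin d), Real.cos ⟪x, u⟫ * Real.exp (-t * Psi d α u)

/-- The semigroup `(P_t φ)(x) = ∫ φ(x+y) p_t(y) dy`. -/
noncomputable def Pt (d : ℕ) (α : ℝ) (φ : EuclideanSpace ℝ (Fin d) → ℝ) (t : ℝ)
    (x : EuclideanSpace ℝ (Fin d)) : ℝ :=
  ∫ y : EuclideanSpace ℝ (Fin d), φ (x + y) * pdens d α t y

/-!
Put `r = (t / T) ^ (1 / α) ≤ 1` and split the Lévy measure at radius `r`. By self-similarity, the
jumps of size at most `r` contribute `T Ψ(r u)` to `t Ψ(u)`, while the remaining jumps form a finite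
symmetric measure, so `exp` of minus their contribution is the characteristic function of a
compound Poisson law `μ`. Hence `p_t` is the convolution of `μ` with the dilation by `r` of `p_T`,
and `P_t φ (x) = P_T φ' (x / r)` for some `φ'` with the same bound as `φ`.

At the fixed time `T` the density is a Schwartz function, because `Ψ` is smooth with polynomially
bounded derivatives and `Ψ(u) ≥ c |u| ^ α - c`. Hence `D² (P_T φ')` is bounded by
`‖φ'‖_∞ ∫ ‖D² p_T‖`, and the chain rule for `x ↦ x / r` contributes `r ^ (-2) = (T / t) ^ (2 / α)`.
-/

open ProbabilityTheory
open scoped ContDiff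

universe u

section OscillatoryIntegrals

theorem abs_iteratedDeriv_one_sub_cos_le (n : ℕ) (s : ℝ) :
    |iteratedDeriv n (fun x => 1 - Real.cos x) s| ≤ |s| ^ (2 - n) := by
  match n with
  | 0 =>
    rw [iteratedDeriv_zero, abs_of_nonneg (by linarith [Real.cos_le_one s]), sq_abs]
    nlinarith [Real.one_sub_sq_div_two_le_cos (x := s), sq_nonneg s]
  | 1 =>
    simpa using Real.abs_sin_le_abs
  | n + 2 =>
    have : iteratedDeriv (n + 2) (fun x => 1 - Real.cos x) = iteratedDeriv n Real.cos := by
      rw [iteratedDeriv_succ', iteratedDeriv_succ']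
      congr 1
      ext; simp
    simpa [this] using Real.abs_iteratedDeriv_cos_le_one n s

variable {V : Type*} [NormedAddCommGroup V] [InnerProductSpace ℝ V] [MeasurableSpace V]
  {E : Type*} [NormedAddCommGroup E] [NormedSpace ℝ E] {ν : Measure V}

theorem norm_integral_comp_inner_smul_le {g : ℝ → ℝ} {m : ℕ} (hgm : ∀ s, |g s| ≤ |s| ^ m)
    {f : V → E} (hfm : Integrable (fun y => ‖y‖ ^ m * ‖f y‖) ν) (u : V) :
    ‖∫ y, g ⟪u, y⟫ • f y ∂ν‖ ≤ (∫ y, ‖y‖ ^ m * ‖f y‖ ∂ν) * ‖u‖ ^ m := by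
  rw [mul_comm, ← integral_const_mul]
  refine norm_integral_le_of_norm_le (hfm.const_mul _) (.of_forall fun y => ?_)
  rw [norm_smul, ← mul_assoc, ← mul_pow]
  gcongr
  exact (hgm _).trans (by gcongr; exact abs_real_inner_le_norm u y)

variable [BorelSpace V] [SecondCountableTopology V]

theorem integrable_comp_inner_smul {g : ℝ → ℝ} {m : ℕ} (hg : Continuous g)
    (hgm : ∀ s, |g s| ≤ |s| ^ m) {f : V → E} (hf : AEStronglyMeasurable f ν)
    (hfm : Integrable (fun y => ‖y‖ ^ m * ‖f y‖) ν) (u : V) :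
    Integrable (fun y => g ⟪u, y⟫ • f y) ν := by
  refine (hfm.const_mul (‖u‖ ^ m)).mono' (by fun_prop) (.of_forall fun y => ?_)
  rw [norm_smul, ← mul_assoc, ← mul_pow]
  gcongr
  exact (hgm _).trans (by gcongr; exact abs_real_inner_le_norm u y)

theorem aestronglyMeasurable_innerSL_smulRight {f : V → E} (hf : AEStronglyMeasurable f ν) :
    AEStronglyMeasurable (fun y => (innerSL ℝ y).smulRight (f y)) ν := by
  have : Continuous fun p : V × E => (innerSL ℝ p.1).smulRight p.2 := by fun_prop
  exact this.comp_aestronglyMeasurable (aestronglyMeasurable_id.prodMk hf)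

theorem hasFDerivAt_integral_comp_inner_smul {g : ℝ → ℝ} {m : ℕ} (hg : ContDiff ℝ 1 g)
    (hg₀ : ∀ s, |g s| ≤ |s| ^ m) (hg₁ : ∀ s, |deriv g s| ≤ |s| ^ (m - 1)) {f : V → E}
    (hf : AEStronglyMeasurable f ν) (hfm : ∀ n ≥ m, Integrable (fun y => ‖y‖ ^ n * ‖f y‖) ν)
    (u : V) :
    HasFDerivAt (fun u => ∫ y, g ⟪u, y⟫ • f y ∂ν)
      (∫ y, deriv g ⟪u, y⟫ • (innerSL ℝ y).smulRight (f y) ∂ν) u := by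
  have : Continuous (deriv g) := hg.continuous_deriv_one
  have hf' := aestronglyMeasurable_innerSL_smulRight hf
  refine hasFDerivAt_integral_of_dominated_of_fderiv_le (F := fun v y => g ⟪v, y⟫ • f y)
    (F' := fun v y => deriv g ⟪v, y⟫ • (innerSL ℝ y).smulRight (f y)) (ball_mem_nhds u one_pos)
    (bound := fun y => (‖u‖ + 1) ^ (m - 1) * (‖y‖ ^ (m - 1 + 1) * ‖f y‖))
    (.of_forall fun v => by fun_prop) (integrable_comp_inner_smul hg.continuous hg₀ hf
      (hfm m le_rfl) u) (by fun_prop) (.of_forall fun y v hv => ?_)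
    ((hfm _ (by lia)).const_mul _) (.of_forall fun y v _ => ?_)
  · have hv' : ‖v‖ ≤ ‖u‖ + 1 := by
      linarith [norm_le_norm_add_norm_sub' v u, mem_ball_iff_norm.1 hv]
    calc ‖deriv g ⟪v, y⟫ • (innerSL ℝ y).smulRight (f y)‖
        = |deriv g ⟪v, y⟫| * (‖y‖ * ‖f y‖) := by
          rw [norm_smul, ContinuousLinearMap.norm_smulRight_apply, innerSL_apply_norm,
            Real.norm_eq_abs]
      _ ≤ (‖v‖ * ‖y‖) ^ (m - 1) * (‖y‖ * ‖f y‖) := by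
          gcongr
          exact (hg₁ _).trans (by gcongr; exact abs_real_inner_le_norm v y)
      _ = ‖v‖ ^ (m - 1) * (‖y‖ ^ (m - 1 + 1) * ‖f y‖) := by ring
      _ ≤ (‖u‖ + 1) ^ (m - 1) * (‖y‖ ^ (m - 1 + 1) * ‖f y‖) := by gcongr
  · have hinner : HasFDerivAt (fun v : V => ⟪v, y⟫) (innerSL ℝ y) v :=
      (innerSL ℝ y).hasFDerivAt.congr_of_eventuallyEq (.of_forall fun w => real_inner_comm _ _)
    refine (((hg.differentiable one_ne_zero _).hasDerivAt.comp_hasFDerivAt v hinner).smul_const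
      (f y)).congr_fderiv (ContinuousLinearMap.ext fun w => ?_)
    simp [mul_smul]

end OscillatoryIntegrals

section OscillatoryIntegralsSmooth

variable {V E : Type u} [NormedAddCommGroup V] [InnerProductSpace ℝ V] [MeasurableSpace V]
  [BorelSpace V] [SecondCountableTopology V] [NormedAddCommGroup E] [NormedSpace ℝ E]
  {ν : Measure V} {g : ℝ → ℝ} {m : ℕ} {f : V → E}

-- Each derivative in `u` replaces `g` by `g'` and `f y` by `⟪·, y⟫ f y`, which lowers `m` by one.
theorem contDiff_integral_comp_inner_smul_and_norm_iteratedFDeriv_le (hg : ContDiff ℝ ∞ g)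
    (hgm : ∀ n s, |iteratedDeriv n g s| ≤ |s| ^ (m - n)) (hf : AEStronglyMeasurable f ν)
    (hfm : ∀ n ≥ m, Integrable (fun y => ‖y‖ ^ n * ‖f y‖) ν) (N : ℕ) :
    ContDiff ℝ N (fun u => ∫ y, g ⟪u, y⟫ • f y ∂ν) ∧
      ∃ C, ∀ u, ‖iteratedFDeriv ℝ N (fun u => ∫ y, g ⟪u, y⟫ • f y ∂ν) u‖ ≤ C * ‖u‖ ^ (m - N) := by
  induction N generalizing E g m with
  | zero =>
    have hg₀ := fun s => iteratedDeriv_zero (f := g) ▸ hgm 0 s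
    refine ⟨contDiff_zero.2 (Differentiable.continuous (𝕜 := ℝ) fun u =>
      (hasFDerivAt_integral_comp_inner_smul (hg.of_le (mod_cast le_top)) hg₀
        (iteratedDeriv_one (f := g) ▸ hgm 1) hf hfm u).differentiableAt),
      _, fun u => (norm_iteratedFDeriv_zero (𝕜 := ℝ)).trans_le
        (norm_integral_comp_inner_smul_le hg₀ (hfm m le_rfl) u)⟩
  | succ N ih =>
    have hderiv := hasFDerivAt_integral_comp_inner_smul (hg.of_le (mod_cast le_top))
      (fun s => iteratedDeriv_zero (f := g) ▸ hgm 0 s) (iteratedDeriv_one (f := g) ▸ hgm 1) hf hfm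
    obtain ⟨hcont, C, hC⟩ := ih (g := deriv g) (m := m - 1)
      (f := fun y => (innerSL ℝ y).smulRight (f y)) (contDiff_infty_iff_deriv.1 hg).2
      (fun n s => by
        rw [← iteratedDeriv_succ', Nat.sub_sub, add_comm 1]; exact hgm (n + 1) s)
      (aestronglyMeasurable_innerSL_smulRight hf)
      (fun n hn => by
        simpa only [ContinuousLinearMap.norm_smulRight_apply, innerSL_apply_norm, pow_succ,
          mul_assoc] using hfm (n + 1) (by lia))
    have hfderiv := funext fun u => (hderiv u).fderiv
    refine ⟨contDiff_succ_iff_fderiv.2 ⟨fun u => (hderiv u).differentiableAt, by simp,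
      hfderiv ▸ hcont⟩, C, fun u => ?_⟩
    rw [← norm_iteratedFDeriv_fderiv, hfderiv, add_comm N, ← Nat.sub_sub]
    exact hC u

theorem hasTemperateGrowth_integral_comp_inner_smul (hg : ContDiff ℝ ∞ g)
    (hgm : ∀ n s, |iteratedDeriv n g s| ≤ |s| ^ (m - n)) (hf : AEStronglyMeasurable f ν)
    (hfm : ∀ n ≥ m, Integrable (fun y => ‖y‖ ^ n * ‖f y‖) ν) :
    (fun u => ∫ y, g ⟪u, y⟫ • f y ∂ν).HasTemperateGrowth := by
  have h := contDiff_integral_comp_inner_smul_and_norm_iteratedFDeriv_le hg hgm hf hfm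
  refine ⟨contDiff_infty.2 fun N => (h N).1, fun N => ?_⟩
  obtain ⟨C, hC⟩ := (h N).2
  refine ⟨m - N, max C 0, fun u => (hC u).trans ?_⟩
  gcongr
  · exact le_max_left _ _
  · linarith

end OscillatoryIntegralsSmooth

section CompoundPoisson

theorem integral_pow_poissonMeasure (r : NNReal) (z : ℂ) :
    ∫ n, z ^ n ∂poissonMeasure r = Complex.exp (r * (z - 1)) := by
  rw [integral_poissonMeasure]
  calc ∑' n : ℕ, (Real.exp (-r) * r ^ n / n.factorial) • z ^ n
      = ∑' n : ℕ, Complex.exp (-r) * ((r * z) ^ n / n.factorial) := by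
        refine tsum_congr fun n => ?_
        rw [Complex.real_smul]
        push_cast
        ring
    _ = Complex.exp (-r) * Complex.exp (r * z) := by
        rw [tsum_mul_left, (NormedSpace.expSeries_div_hasSum_exp (r * z : ℂ)).tsum_eq,
          Complex.exp_eq_exp_ℂ]
    _ = Complex.exp (r * (z - 1)) := by rw [← Complex.exp_add]; ring_nf

variable {V : Type*} [NormedAddCommGroup V] [InnerProductSpace ℝ V] [MeasurableSpace V]

/-- The `n`-fold convolution power `μ ∗ ⋯ ∗ μ`. -/
noncomputable def convPow (μ : Measure V) : ℕ → Measure V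
  | 0 => .dirac 0
  | n + 1 => convPow μ n ∗ μ

/-- The law of `Y₁ + ⋯ + Y_N` for i.i.d. `Yᵢ` of law `μ` and an independent Poisson variable `N` of
rate `r`. -/
noncomputable def compoundPoisson (r : NNReal) (μ : Measure V) : Measure V :=
  (poissonMeasure r).bind (convPow μ)

variable [BorelSpace V] [SecondCountableTopology V] {μ : Measure V}

theorem integrable_cexp_inner_mul_I [IsFiniteMeasure μ] (u : V) :
    Integrable (fun y => Complex.exp (⟪y, u⟫ * Complex.I)) μ :=
  (integrable_const (1 : ℝ)).mono' (by fun_prop) (.of_forall fun y => by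
    rw [Complex.norm_exp_ofReal_mul_I])

variable [IsProbabilityMeasure μ]

instance isProbabilityMeasure_convPow (n : ℕ) : IsProbabilityMeasure (convPow μ n) := by
  induction n with
  | zero => exact Measure.dirac.isProbabilityMeasure
  | succ n _ => exact inferInstanceAs (IsProbabilityMeasure (convPow μ n ∗ μ))

theorem charFun_convPow (n : ℕ) (u : V) : charFun (convPow μ n) u = charFun μ u ^ n := by
  induction n with
  | zero => simp [convPow]
  | succ n ih => rw [convPow, charFun_conv, ih, pow_succ]

instance isProbabilityMeasure_compoundPoisson (r : NNReal) :
    IsProbabilityMeasure (compoundPoisson r μ) :=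
  isProbabilityMeasure_bind (by fun_prop) (.of_forall fun _ => inferInstance)

theorem charFun_compoundPoisson (r : NNReal) (u : V) :
    charFun (compoundPoisson r μ) u = Complex.exp (r * (charFun μ u - 1)) := by
  let κ : Kernel ℕ V := ⟨convPow μ, by fun_prop⟩
  have hκ : compoundPoisson r μ = (κ ∘ₖ Kernel.const Unit (poissonMeasure r)) () := by
    rw [Kernel.comp_apply, Kernel.const_apply]; rfl
  have hint := integrable_cexp_inner_mul_I (μ := compoundPoisson r μ) u
  rw [hκ] at hint
  rw [charFun_apply, hκ, Kernel.integral_comp hint, Kernel.const_apply,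
    ← integral_pow_poissonMeasure]
  exact integral_congr_ae (.of_forall fun n => charFun_convPow n u)

theorem re_charFun {μ : Measure V} [IsFiniteMeasure μ] (u : V) :
    (charFun μ u).re = ∫ y, Real.cos ⟪u, y⟫ ∂μ := by
  rw [charFun_apply, ← RCLike.re_eq_complex_re, ← integral_re (integrable_cexp_inner_mul_I u)]
  simp only [RCLike.re_eq_complex_re, Complex.exp_ofReal_mul_I_re, real_inner_comm]

end CompoundPoisson

section ExpNeg

theorem exists_one_add_pow_mul_exp_neg_rpow_le {a c : ℝ} (ha : 0 < a) (hc : 0 < c) (k : ℕ) :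
    ∃ C, ∀ s : ℝ, 0 ≤ s → (1 + s) ^ k * Real.exp (-(c * s ^ a)) ≤ C := by
  obtain ⟨m, hm⟩ := exists_nat_ge (k / a)
  refine ⟨2 ^ (k - 1) * (2 + m.factorial / c ^ m), fun s hs => ?_⟩
  have hexp : Real.exp (-(c * s ^ a)) ≤ 1 := Real.exp_le_one_iff.2 (neg_nonpos.2 (by positivity))
  have hpow : s ^ k ≤ 1 + (s ^ a) ^ m := by
    rcases le_total s 1 with h | h
    · exact (pow_le_one₀ hs h).trans (le_add_of_nonneg_right (by positivity))
    · rw [← Real.rpow_natCast s k, ← Real.rpow_mul_natCast hs]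
      have : s ^ (k : ℝ) ≤ s ^ (a * m) :=
        Real.rpow_le_rpow_of_exponent_le h (by rwa [div_le_iff₀' ha] at hm)
      linarith
  have hfac : (s ^ a) ^ m * Real.exp (-(c * s ^ a)) ≤ m.factorial / c ^ m := by
    have := Real.pow_div_factorial_le_exp (c * s ^ a) (by positivity) m
    rw [Real.exp_neg, ← div_eq_mul_inv, div_le_div_iff₀ (by positivity) (by positivity)]
    rw [div_le_iff₀ (by positivity), mul_pow] at this
    linarith
  calc (1 + s) ^ k * Real.exp (-(c * s ^ a))
      ≤ 2 ^ (k - 1) * (1 ^ k + s ^ k) * Real.exp (-(c * s ^ a)) := by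
        gcongr; exact add_pow_le zero_le_one hs k
    _ ≤ 2 ^ (k - 1) * (1 + (1 + (s ^ a) ^ m)) * Real.exp (-(c * s ^ a)) := by
        rw [one_pow]; gcongr
    _ = 2 ^ (k - 1) * (2 * Real.exp (-(c * s ^ a)) +
          (s ^ a) ^ m * Real.exp (-(c * s ^ a))) := by ring
    _ ≤ 2 ^ (k - 1) * (2 + m.factorial / c ^ m) := by gcongr; linarith

variable {V : Type*} [NormedAddCommGroup V] [NormedSpace ℝ V]

theorem exists_norm_iteratedFDeriv_exp_neg_le {f : V → ℝ} (hf : f.HasTemperateGrowth) (n : ℕ) :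
    ∃ k C, 0 ≤ C ∧ ∀ u, ‖iteratedFDeriv ℝ n (fun v => Real.exp (-f v)) u‖ ≤
      C * (1 + ‖u‖) ^ k * Real.exp (-f u) := by
  obtain ⟨k, C, hC, hfC⟩ := hf.neg.norm_iteratedFDeriv_le_uniform n
  refine ⟨k * n, n.factorial * (1 + C) ^ n, by positivity, fun u => ?_⟩
  refine (norm_iteratedFDeriv_comp_le Real.contDiff_exp hf.neg.1 (mod_cast le_top) u
    (C := Real.exp (-f u)) (D := (1 + C) * (1 + ‖u‖) ^ k) (fun i _ => ?_)
    (fun i hi hin => (hfC i hin u).trans ?_)).trans_eq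
    (by rw [mul_pow, pow_mul]; ring)
  · rw [norm_iteratedFDeriv_eq_norm_iteratedDeriv, iteratedDeriv_eq_iterate, Real.iter_deriv_exp,
      Pi.neg_apply, Real.norm_of_nonneg (Real.exp_nonneg _)]
  · have h1 : (1 : ℝ) ≤ (1 + ‖u‖) ^ k := one_le_pow₀ (by linarith [norm_nonneg u])
    calc C * (1 + ‖u‖) ^ k ≤ (1 + C) * (1 + ‖u‖) ^ k := by gcongr; linarith
      _ ≤ ((1 + C) * (1 + ‖u‖) ^ k) ^ i := le_self_pow₀ (by nlinarith) (by lia)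

theorem exists_schwartzMap_eq_exp_neg {f : V → ℝ} (hf : f.HasTemperateGrowth) {a b c : ℝ}
    (ha : 0 < a) (hc : 0 < c) (hfa : ∀ u, c * ‖u‖ ^ a - b ≤ f u) :
    ∃ g : SchwartzMap V ℝ, ∀ u, g u = Real.exp (-f u) := by
  refine ⟨⟨fun u => Real.exp (-f u), Real.contDiff_exp.comp hf.1.neg, fun k n => ?_⟩,
    fun u => rfl⟩
  obtain ⟨l, C, hC, hfC⟩ := exists_norm_iteratedFDeriv_exp_neg_le hf n
  obtain ⟨D, hdecay⟩ := exists_one_add_pow_mul_exp_neg_rpow_le ha hc (k + l)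
  refine ⟨C * Real.exp b * D, fun u => ?_⟩
  calc ‖u‖ ^ k * ‖iteratedFDeriv ℝ n (fun v => Real.exp (-f v)) u‖
      ≤ (1 + ‖u‖) ^ k * (C * (1 + ‖u‖) ^ l * Real.exp (b - c * ‖u‖ ^ a)) := by
        gcongr
        · linarith
        · refine (hfC u).trans ?_
          gcongr
          linarith [hfa u]
    _ = C * Real.exp b * ((1 + ‖u‖) ^ (k + l) * Real.exp (-(c * ‖u‖ ^ a))) := by
        rw [sub_eq_add_neg, Real.exp_add]; ring
    _ ≤ C * Real.exp b * D := by gcongr; exact hdecay _ (norm_nonneg u)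

end ExpNeg

section Cosine

variable {V : Type*} [NormedAddCommGroup V] [InnerProductSpace ℝ V] [FiniteDimensional ℝ V]
  [MeasurableSpace V] [BorelSpace V]

open FourierTransform in
theorem exists_schwartzMap_eq_integral_cos (g : SchwartzMap V ℝ) :
    ∃ h : SchwartzMap V ℝ, ∀ x, h x = ∫ u, Real.cos ⟪x, u⟫ * g u := by
  have hpi : (2 * Real.pi)⁻¹ ≠ 0 := by positivity
  let F : SchwartzMap V ℂ := 𝓕 (g.postcompCLM Complex.ofRealCLM)
  let G : SchwartzMap V ℂ := SchwartzMap.compCLMOfContinuousLinearEquiv ℝ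
      (ContinuousLinearEquiv.smulLeft (Units.mk0 _ hpi)) F
  refine ⟨G.postcompCLM Complex.reCLM, fun x => ?_⟩
  have hG : G x = ∫ u, Complex.exp ((-⟪u, x⟫ : ℝ) * Complex.I) • (g u : ℂ) := by
    change F ((2 * Real.pi)⁻¹ • x) = _
    simp only [F, SchwartzMap.fourier_coe, Real.fourier_eq']
    refine integral_congr_ae (.of_forall fun u => ?_)
    have hscale : -2 * Real.pi * ⟪u, (2 * Real.pi)⁻¹ • x⟫ = -⟪u, x⟫ := by
      rw [real_inner_smul_right]; field_simp
    simp only [hscale, SchwartzMap.postcompCLM_apply, Complex.ofRealCLM_apply]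
  have hint : Integrable fun u => Complex.exp ((-⟪u, x⟫ : ℝ) * Complex.I) • (g u : ℂ) :=
    g.integrable.norm.mono' (by fun_prop) (.of_forall fun u => by
      rw [norm_smul, Complex.norm_exp_ofReal_mul_I, one_mul, Complex.norm_real])
  rw [SchwartzMap.postcompCLM_apply, hG, Complex.reCLM_apply, ← RCLike.re_eq_complex_re,
    ← integral_re hint]
  simp [Complex.exp_re, real_inner_comm]

end Cosine

section Smoothing
theorem integral_translate_smul {G E : Type*} [AddCommGroup G] [MeasurableSpace G]
    [MeasurableAdd G] [NormedAddCommGroup E] [NormedSpace ℝ E] {μ : Measure G}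
    [μ.IsAddLeftInvariant] (φ : G → ℝ) (g : G → E) (x : G) :
    ∫ y, φ (x + y) • g y ∂μ = ∫ y, φ y • g (y - x) ∂μ := by
  simpa only [add_sub_cancel_left] using integral_add_left_eq_self (fun y => φ y • g (y - x)) x

variable {V F : Type*} [NormedAddCommGroup V] [NormedSpace ℝ V] [FiniteDimensional ℝ V]
  [MeasurableSpace V] [BorelSpace V] [NormedAddCommGroup F] [NormedSpace ℝ F]
  {μ : Measure V} [μ.IsAddHaarMeasure] {φ : V → ℝ} {M : ℝ}

theorem exists_integrable_norm_schwartzMap_sub_le (g : SchwartzMap V F) (x : V) :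
    ∃ b : V → ℝ, Integrable b μ ∧ ∀ z ∈ ball x 1, ∀ y, ‖g (y - z)‖ ≤ b y := by
  let r := Module.finrank ℝ V + 1
  obtain ⟨C, hC⟩ : ∃ C, ∀ y, (1 + ‖y‖) ^ r * ‖g y‖ ≤ C :=
    ⟨_, fun y => by simpa only [norm_iteratedFDeriv_zero] using
      SchwartzMap.one_add_le_sup_seminorm_apply (𝕜 := ℝ) (m := (r, 0)) le_rfl le_rfl g y⟩
  refine ⟨fun y => 2 ^ r * C * (1 + ‖y - x‖) ^ (-(r : ℝ)), .const_mul
    ((integrable_one_add_norm (by simp [r])).comp_sub_right x) _, fun z hz y => ?_⟩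
  have hyz : 1 + ‖y - x‖ ≤ 2 * (1 + ‖y - z‖) := by
    linarith [norm_sub_le_norm_sub_add_norm_sub y z x, mem_ball_iff_norm.1 hz,
      norm_nonneg (y - z)]
  beta_reduce
  rw [Real.rpow_neg (by positivity), Real.rpow_natCast, ← div_eq_mul_inv,
    le_div_iff₀ (by positivity), mul_comm]
  calc (1 + ‖y - x‖) ^ r * ‖g (y - z)‖ ≤ (2 * (1 + ‖y - z‖)) ^ r * ‖g (y - z)‖ := by gcongr
    _ = 2 ^ r * ((1 + ‖y - z‖) ^ r * ‖g (y - z)‖) := by rw [mul_pow, mul_assoc]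
    _ ≤ 2 ^ r * C := by gcongr; exact hC _

theorem hasFDerivAt_integral_translate_smul (hφ : Measurable φ) (hM : ∀ x, |φ x| ≤ M)
    (g : SchwartzMap V F) (x : V) :
    HasFDerivAt (fun x => ∫ y, φ (x + y) • g y ∂μ)
      (-∫ y, φ (x + y) • SchwartzMap.fderivCLM ℝ V F g y ∂μ) x := by
  obtain ⟨b, hb, hgb⟩ := exists_integrable_norm_schwartzMap_sub_le (μ := μ)
    (SchwartzMap.fderivCLM ℝ V F g) x
  have hM₀ : 0 ≤ M := (abs_nonneg _).trans (hM 0)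
  simp only [integral_translate_smul, ← integral_neg, ← smul_neg]
  refine hasFDerivAt_integral_of_dominated_of_fderiv_le (F := fun z y => φ y • g (y - z))
    (F' := fun z y => φ y • -SchwartzMap.fderivCLM ℝ V F g (y - z)) (bound := fun y => M * b y)
    (ball_mem_nhds x one_pos) (.of_forall fun z => by fun_prop)
    ((g.integrable.comp_sub_right x).bdd_smul M (by fun_prop) (.of_forall hM)) (by fun_prop)
    (.of_forall fun y z hz => ?_) (hb.const_mul M) (.of_forall fun y z _ => ?_)
  · rw [norm_smul, norm_neg]
    exact mul_le_mul (hM y) (hgb z hz y) (norm_nonneg _) hM₀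
  · refine (((g.hasFDerivAt (x := y - z)).comp z ((hasFDerivAt_id z).const_sub y)).const_smul
      (φ y)).congr_fderiv ?_
    ext
    simp

end Smoothing

theorem contDiff_integral_translate_smul_and_norm_iteratedFDeriv_le {V F : Type u}
    [NormedAddCommGroup V] [NormedSpace ℝ V] [FiniteDimensional ℝ V]
    [MeasurableSpace V] [BorelSpace V] [NormedAddCommGroup F] [NormedSpace ℝ F]
    {μ : Measure V} [μ.IsAddHaarMeasure] {φ : V → ℝ} {M : ℝ}
    (hφ : Measurable φ) (hM : ∀ x, |φ x| ≤ M) (g : SchwartzMap V F) (n : ℕ) :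
    ContDiff ℝ n (fun x => ∫ y, φ (x + y) • g y ∂μ) ∧
      ∀ x, ‖iteratedFDeriv ℝ n (fun x => ∫ y, φ (x + y) • g y ∂μ) x‖ ≤
        M * ∫ y, ‖iteratedFDeriv ℝ n g y‖ ∂μ := by
  have hderiv := hasFDerivAt_integral_translate_smul (μ := μ) hφ hM g
  induction n generalizing F with
  | zero =>
    refine ⟨contDiff_zero.2 (Differentiable.continuous (𝕜 := ℝ) fun x =>
      (hderiv x).differentiableAt), fun x => ?_⟩
    simp only [norm_iteratedFDeriv_zero, ← integral_const_mul]
    refine norm_integral_le_of_norm_le (g.integrable.norm.const_mul M) (.of_forall fun y => ?_)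
    rw [norm_smul]
    gcongr
    exact hM _
  | succ n ih =>
    obtain ⟨hcont, hbound⟩ := ih (SchwartzMap.fderivCLM ℝ V F g)
      (hasFDerivAt_integral_translate_smul hφ hM _)
    have hfderiv := funext fun x => (hderiv x).fderiv
    refine ⟨contDiff_succ_iff_fderiv.2 ⟨fun x => (hderiv x).differentiableAt, by simp,
      hfderiv ▸ hcont.neg⟩, fun x => ?_⟩
    simp only [← norm_iteratedFDeriv_fderiv, hfderiv]
    rw [← Pi.neg_def, iteratedFDeriv_neg_apply, norm_neg]
    exact hbound x

section LevyExponent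

theorem one_sub_cos_nonneg (s : ℝ) : 0 ≤ 1 - Real.cos s := sub_nonneg.2 (Real.cos_le_one s)

theorem isFiniteMeasure_restrict_compl_closedBall {V : Type*} [NormedAddCommGroup V]
    [MeasurableSpace V] {ν : Measure V} (hν : Integrable (fun y => ‖y‖ ^ 2) ν) {r : ℝ}
    (hr : 0 < r) : IsFiniteMeasure (ν.restrict (closedBall 0 r)ᶜ) := by
  refine isFiniteMeasure_restrict.2 ((measure_mono fun y hy => ?_).trans_lt
    (hν.measure_ge_lt_top (sq_pos_of_pos hr))).ne
  have : r < ‖y‖ := by simpa using hy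
  exact pow_le_pow_left₀ hr.le this.le 2

/-- The characteristic exponent `u ↦ ∫ (1 - cos ⟪u, y⟫) dν(y)` of the pure-jump Lévy process with
symmetric Lévy measure `ν`. -/
noncomputable def levyExponent {V : Type*} [NormedAddCommGroup V] [InnerProductSpace ℝ V]
    [MeasurableSpace V] (ν : Measure V) (u : V) : ℝ :=
  ∫ y, (1 - Real.cos ⟪u, y⟫) ∂ν

variable {V : Type*} [NormedAddCommGroup V] [InnerProductSpace ℝ V] [MeasurableSpace V]
  {ν : Measure V}

theorem levyExponent_nonneg (ν : Measure V) (u : V) : 0 ≤ levyExponent ν u :=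
  integral_nonneg fun _ => one_sub_cos_nonneg _

theorem levyExponent_smul_measure (c : NNReal) (ν : Measure V) (u : V) :
    levyExponent (c • ν) u = c * levyExponent ν u :=
  integral_smul_nnreal_measure _ _

variable [BorelSpace V] [SecondCountableTopology V]

theorem integrable_one_sub_cos_inner (hν : Integrable (fun y => ‖y‖ ^ 2) ν) (u : V) :
    Integrable (fun y => 1 - Real.cos ⟪u, y⟫) ν := by
  refine (hν.const_mul (‖u‖ ^ 2)).mono' (by fun_prop) (.of_forall fun y => ?_)
  rw [Real.norm_of_nonneg (one_sub_cos_nonneg _), ← mul_pow]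
  have := abs_real_inner_le_norm u y
  nlinarith [Real.one_sub_sq_div_two_le_cos (x := ⟪u, y⟫), sq_abs ⟪u, y⟫, abs_nonneg ⟪u, y⟫]

theorem levyExponent_eq_add_compl (hν : Integrable (fun y => ‖y‖ ^ 2) ν) {s : Set V}
    (hs : MeasurableSet s) (u : V) :
    levyExponent ν u = levyExponent (ν.restrict s) u + levyExponent (ν.restrict sᶜ) u :=
  (integral_add_compl hs (integrable_one_sub_cos_inner hν u)).symm

theorem hasTemperateGrowth_levyExponent (hν : ∀ n ≥ 2, Integrable (fun y => ‖y‖ ^ n) ν) :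
    (levyExponent ν).HasTemperateGrowth := by
  let g : ℝ → ℝ := fun s => 1 - Real.cos s
  have hg : ContDiff ℝ ∞ g := by fun_prop
  have hν' : ∀ n ≥ 2, Integrable (fun y => ‖y‖ ^ n * ‖(1 : ℝ)‖) ν := by simpa using hν
  have hexp : levyExponent ν = fun u => ∫ y, g ⟪u, y⟫ • (1 : ℝ) ∂ν := by
    simp [levyExponent, g, funext_iff]
  have hderiv := hasFDerivAt_integral_comp_inner_smul (hg.of_le (mod_cast le_top))
    (fun s => iteratedDeriv_zero (f := g) ▸ abs_iteratedDeriv_one_sub_cos_le 0 s)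
    (iteratedDeriv_one (f := g) ▸ abs_iteratedDeriv_one_sub_cos_le 1) aestronglyMeasurable_const hν'
  have hbound (u : V) : ‖∫ y, g ⟪u, y⟫ • (1 : ℝ) ∂ν‖ ≤
      (∫ y, ‖y‖ ^ 2 * ‖(1 : ℝ)‖ ∂ν) * (1 + ‖u‖) ^ 2 := by
    refine (norm_integral_comp_inner_smul_le (fun s => iteratedDeriv_zero (f := g) ▸
      abs_iteratedDeriv_one_sub_cos_le 0 s) (hν' 2 le_rfl) u).trans ?_
    gcongr
    linarith
  rw [hexp]
  refine .of_fderiv ?_ (fun u => (hderiv u).differentiableAt) hbound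
  rw [funext fun u => (hderiv u).fderiv]
  refine hasTemperateGrowth_integral_comp_inner_smul (m := 1)
    (contDiff_infty_iff_deriv.1 hg).2 (fun n s => ?_)
    (aestronglyMeasurable_innerSL_smulRight aestronglyMeasurable_const) (fun n hn => ?_)
  · rw [← iteratedDeriv_succ']
    exact (abs_iteratedDeriv_one_sub_cos_le (n + 1) s).trans_eq (by congr 1; lia)
  · simpa [← pow_succ] using hν (n + 1) (by lia)

-- With `X, X'` independent compound Poisson variables of rate `ν(V) / 2`, `X - X'` has this law.
theorem exists_charFun_eq_exp_neg_levyExponent (ν : Measure V) [IsFiniteMeasure ν] :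
    ∃ μ : Measure V, IsProbabilityMeasure μ ∧
      ∀ u, charFun μ u = Real.exp (-levyExponent ν u) := by
  obtain rfl | hν₀ := eq_zero_or_neZero ν
  · exact ⟨.dirac 0, inferInstance, fun u => by simp [levyExponent]⟩
  let r : NNReal := (ν Set.univ).toNNReal
  have hr : (r : ℝ) = ν.real Set.univ := rfl
  have hr₀ : ν.real Set.univ ≠ 0 := measureReal_univ_ne_zero
  let κ : Measure V := compoundPoisson (r / 2) ((ν Set.univ)⁻¹ • ν)
  have : IsProbabilityMeasure (κ.map ((-1 : ℝ) • ·)) :=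
    Measure.isProbabilityMeasure_map (by fun_prop)
  refine ⟨κ ∗ κ.map ((-1 : ℝ) • ·), inferInstance, fun u => ?_⟩
  have hcos : Integrable (fun y => Real.cos ⟪u, y⟫) ν :=
    (integrable_const (1 : ℝ)).mono' (by fun_prop) (.of_forall fun y => Real.abs_cos_le_one _)
  have hre : (charFun ((ν Set.univ)⁻¹ • ν) u).re =
      (ν.real Set.univ)⁻¹ * ∫ y, Real.cos ⟪u, y⟫ ∂ν := by
    rw [re_charFun, integral_smul_measure, ENNReal.toReal_inv, smul_eq_mul, Measure.real]
  have hκ : ‖charFun κ u‖ ^ 2 = Real.exp (-levyExponent ν u) := by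
    rw [charFun_compoundPoisson, Complex.norm_exp, ← Real.exp_nat_mul, levyExponent,
      integral_sub (integrable_const _) hcos, integral_const, smul_eq_mul, mul_one,
      show (((r / 2 : NNReal) : ℂ)) = ((r / 2 : ℝ) : ℂ) by push_cast; rfl,
      Complex.re_ofReal_mul, Complex.sub_re, hre, Complex.one_re, hr]
    congr 1
    push_cast
    field_simp
    ring
  rw [charFun_conv, charFun_map_smul, neg_one_smul, charFun_neg, Complex.mul_conj,
    Complex.normSq_eq_norm_sq, hκ]

end LevyExponent

section TruncatedStableMeasure

/-- The Lévy measure `‖y‖ ^ (-(dim V + α)) dy` on `‖y‖ ≤ R` of the `α`-stable process on `V` with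
jumps truncated at size `R`. -/
noncomputable def truncatedStableMeasure (V : Type*) [NormedAddCommGroup V] [InnerProductSpace ℝ V]
    [FiniteDimensional ℝ V] [MeasurableSpace V] [BorelSpace V] (α R : ℝ) : Measure V :=
  (volume.restrict (closedBall 0 R)).withDensity
    fun y => ENNReal.ofReal (‖y‖ ^ (-(Module.finrank ℝ V + α)))

variable {V : Type*} [NormedAddCommGroup V] [InnerProductSpace ℝ V] [FiniteDimensional ℝ V]
  [MeasurableSpace V] [BorelSpace V] {α R : ℝ}

theorem integral_truncatedStableMeasure (α R : ℝ) (f : V → ℝ) :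
    ∫ y, f y ∂truncatedStableMeasure V α R =
      ∫ y in closedBall 0 R, ‖y‖ ^ (-(Module.finrank ℝ V + α)) * f y := by
  rw [truncatedStableMeasure, integral_withDensity_eq_integral_toReal_smul (by fun_prop) (by simp)]
  simp only [ENNReal.toReal_ofReal (Real.rpow_nonneg (norm_nonneg _) _), smul_eq_mul]

theorem integrable_truncatedStableMeasure_iff {f : V → ℝ} :
    Integrable f (truncatedStableMeasure V α R) ↔
      IntegrableOn (fun y => ‖y‖ ^ (-(Module.finrank ℝ V + α)) * f y) (closedBall 0 R) := by
  rw [truncatedStableMeasure, integrable_withDensity_iff_integrable_smul' (by fun_prop) (by simp)]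
  simp only [ENNReal.toReal_ofReal (Real.rpow_nonneg (norm_nonneg _) _), smul_eq_mul, IntegrableOn]

theorem integrable_norm_pow_truncatedStableMeasure {n : ℕ} (hn : α < n) (R : ℝ) :
    Integrable (fun y => ‖y‖ ^ n) (truncatedStableMeasure V α R) := by
  rw [integrable_truncatedStableMeasure_iff]
  rcases subsingleton_or_nontrivial V with hV | hV
  · have : IsFiniteMeasure (volume.restrict (closedBall (0 : V) R)) :=
      isFiniteMeasure_restrict.2 measure_closedBall_lt_top.ne
    exact Integrable.of_finite (μ := volume.restrict (closedBall 0 R))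
  refine IntegrableOn.mono_set ?_ (closedBall_subset_ball (lt_add_one R))
  refine (integrableOn_fun_norm_addHaar volume
    (f := fun s => s ^ (-(Module.finrank ℝ V + α)) * s ^ n)).2 ?_
  have hdim : 1 ≤ Module.finrank ℝ V := Module.finrank_pos
  rcases le_or_gt (R + 1) 0 with hR | hR
  · simp [Set.Ioo_eq_empty hR.not_gt]
  refine ((intervalIntegral.integrableOn_Ioo_rpow_iff (s := n - 1 - α) hR).2
    (by linarith)).congr_fun (fun s hs => ?_) measurableSet_Ioo
  simp only [smul_eq_mul, ← Real.rpow_natCast, Nat.cast_sub hdim, ← Real.rpow_add hs.1]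
  congr 1
  push_cast
  ring

theorem restrict_truncatedStableMeasure_closedBall {r : ℝ} (hr : r ≤ R) :
    (truncatedStableMeasure V α R).restrict (closedBall 0 r) = truncatedStableMeasure V α r := by
  rw [truncatedStableMeasure, restrict_withDensity measurableSet_closedBall,
    Measure.restrict_restrict measurableSet_closedBall,
    Set.inter_eq_self_of_subset_left (closedBall_subset_closedBall hr), truncatedStableMeasure]

theorem levyExponent_truncatedStableMeasure_smul {r : ℝ} (hr : 0 < r) (hR : 0 ≤ R) (u : V) :
    levyExponent (truncatedStableMeasure V α R) (r • u) =
      r ^ α * levyExponent (truncatedStableMeasure V α (r * R)) u := by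
  let f : V → ℝ := fun y => ‖y‖ ^ (-(Module.finrank ℝ V + α)) * (1 - Real.cos ⟪u, y⟫)
  have hf (y : V) : ‖y‖ ^ (-(Module.finrank ℝ V + α)) * (1 - Real.cos ⟪r • u, y⟫) =
      r ^ (Module.finrank ℝ V + α) * f (r • y) := by
    rw [real_inner_smul_left, ← real_inner_smul_right]
    simp only [f]
    rw [norm_smul, Real.norm_of_nonneg hr.le, Real.mul_rpow hr.le (norm_nonneg y),
      Real.rpow_neg hr.le]
    field_simp
  simp only [levyExponent, integral_truncatedStableMeasure, hf, integral_const_mul]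
  rw [Measure.setIntegral_comp_smul_of_pos volume f _ hr, _root_.smul_closedBall _ _ hR, smul_zero,
    Real.norm_of_nonneg hr.le, smul_eq_mul, ← mul_assoc, Real.rpow_add hr, Real.rpow_natCast]
  congr 1
  field_simp

theorem levyExponent_truncatedStableMeasure_pos (hα : α < 2) (hR : 0 < R) {u : V} (hu : u ≠ 0) :
    0 < levyExponent (truncatedStableMeasure V α R) u := by
  have hint : IntegrableOn (fun y => ‖y‖ ^ (-(Module.finrank ℝ V + α)) * (1 - Real.cos ⟪u, y⟫))
      (closedBall 0 R) := integrable_truncatedStableMeasure_iff.1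
    (integrable_one_sub_cos_inner (integrable_norm_pow_truncatedStableMeasure (mod_cast hα) R) u)
  rw [levyExponent, integral_truncatedStableMeasure, setIntegral_pos_iff_support_of_nonneg_ae
    (.of_forall fun y => mul_nonneg (by positivity) (one_sub_cos_nonneg _)) hint]
  let s : Set V := ball 0 (min R ‖u‖⁻¹) ∩ {y | 0 < ⟪u, y⟫}
  have hs : IsOpen s := isOpen_ball.inter (isOpen_lt (by fun_prop) (by fun_prop))
  have hs₀ : s.Nonempty := by
    have hmin : 0 < min R ‖u‖⁻¹ := lt_min hR (inv_pos.2 (norm_pos_iff.2 hu))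
    refine ⟨(min R ‖u‖⁻¹ / 2 * ‖u‖⁻¹) • u, ?_, ?_⟩
    · rw [mem_ball_zero_iff, norm_smul, norm_mul, norm_inv, norm_norm, mul_assoc,
        inv_mul_cancel₀ (norm_ne_zero_iff.2 hu), mul_one, Real.norm_of_nonneg (by positivity)]
      exact half_lt_self hmin
    · rw [Set.mem_ofPred_eq, real_inner_smul_right, real_inner_self_eq_norm_sq]
      positivity
  refine (hs.measure_pos volume hs₀).trans_le (measure_mono fun y ⟨hy, hpos⟩ => ⟨?_, ?_⟩)
  · have hy₀ : y ≠ 0 := by rintro rfl; simp at hpos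
    have hlt : ⟪u, y⟫ < 1 := (real_inner_le_norm u y).trans_lt <| by
      rw [← mul_inv_cancel₀ (norm_ne_zero_iff.2 hu)]
      exact mul_lt_mul_of_pos_left ((mem_ball_zero_iff.1 hy).trans_le (min_le_right _ _))
        (norm_pos_iff.2 hu)
    have hcos : Real.cos ⟪u, y⟫ < 1 := by
      rw [← Real.cos_zero]
      exact Real.cos_lt_cos_of_nonneg_of_le_pi le_rfl (by linarith [Real.pi_gt_three]) hpos
    exact (mul_pos (Real.rpow_pos_of_pos (norm_pos_iff.2 hy₀) _) (sub_pos.2 hcos)).ne'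
  · exact closedBall_subset_closedBall (min_le_left _ _) (ball_subset_closedBall hy)

theorem levyExponent_truncatedStableMeasure_eq_add_compl (hα : α < 2) {r : ℝ} (hr : r ≤ R) (u : V) :
    levyExponent (truncatedStableMeasure V α R) u = levyExponent (truncatedStableMeasure V α r) u +
      levyExponent ((truncatedStableMeasure V α R).restrict (closedBall 0 r)ᶜ) u := by
  rw [levyExponent_eq_add_compl (integrable_norm_pow_truncatedStableMeasure (mod_cast hα) R)
    (measurableSet_closedBall (x := 0) (ε := r)), restrict_truncatedStableMeasure_closedBall hr]

theorem levyExponent_truncatedStableMeasure_mono (hα : α < 2) {r : ℝ} (hr : r ≤ R) (u : V) :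
    levyExponent (truncatedStableMeasure V α r) u ≤
      levyExponent (truncatedStableMeasure V α R) u := by
  rw [levyExponent_truncatedStableMeasure_eq_add_compl hα hr]
  exact le_add_of_nonneg_right (levyExponent_nonneg _ u)

theorem hasTemperateGrowth_levyExponent_truncatedStableMeasure (hα : α < 2) (R : ℝ) :
    (levyExponent (truncatedStableMeasure V α R)).HasTemperateGrowth :=
  hasTemperateGrowth_levyExponent fun _ hn =>
    integrable_norm_pow_truncatedStableMeasure (hα.trans_le (mod_cast hn)) R

theorem exists_mul_rpow_sub_le_levyExponent_truncatedStableMeasure (hα₀ : 0 ≤ α) (hα₂ : α < 2)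
    (hR : 0 < R) :
    ∃ c > 0, ∀ u, c * ‖u‖ ^ α - c ≤ levyExponent (truncatedStableMeasure V α R) u := by
  have hcont : Continuous (levyExponent (truncatedStableMeasure V α R)) :=
    (hasTemperateGrowth_levyExponent_truncatedStableMeasure hα₂ R).1.continuous
  obtain ⟨c, hc, hcmin⟩ := (isCompact_sphere (0 : V) 1).exists_forall_le' hcont.continuousOn
    fun u hu => levyExponent_truncatedStableMeasure_pos hα₂ hR (ne_zero_of_mem_unit_sphere ⟨u, hu⟩)
  refine ⟨c, hc, fun u => ?_⟩
  rcases le_or_gt ‖u‖ 1 with hu | hu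
  · have : ‖u‖ ^ α ≤ 1 := Real.rpow_le_one (norm_nonneg u) hu hα₀
    nlinarith [levyExponent_nonneg (truncatedStableMeasure V α R) u]
  have hu₀ : 0 < ‖u‖ := one_pos.trans hu
  have hscale := levyExponent_truncatedStableMeasure_smul (V := V) (α := α) (inv_pos.2 hu₀) hR.le u
  rw [Real.inv_rpow hu₀.le, eq_inv_mul_iff_mul_eq₀ (by positivity)] at hscale
  have hunit : ‖u‖⁻¹ • u ∈ sphere (0 : V) 1 := by
    simp [norm_smul, hu₀.ne']
  calc c * ‖u‖ ^ α - c ≤ ‖u‖ ^ α * levyExponent (truncatedStableMeasure V α R) (‖u‖⁻¹ • u) := by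
        rw [mul_comm]
        exact (sub_le_self _ hc.le).trans (by gcongr; exact hcmin _ hunit)
    _ = levyExponent (truncatedStableMeasure V α (‖u‖⁻¹ * R)) u := hscale
    _ ≤ levyExponent (truncatedStableMeasure V α R) u :=
        levyExponent_truncatedStableMeasure_mono hα₂
          (mul_le_of_le_one_left hR.le (inv_le_one_of_one_le₀ hu.le)) u

end TruncatedStableMeasure

section Mixture

variable {V : Type*} [NormedAddCommGroup V] [InnerProductSpace ℝ V] [FiniteDimensional ℝ V]
  [MeasurableSpace V] [BorelSpace V] {μ : Measure V}

theorem integral_cos_inner_add_of_charFun_eq [IsFiniteMeasure μ] {u : V} {m : ℝ}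
    (hm : charFun μ u = m) (x : V) :
    ∫ w, Real.cos ⟪x + w, u⟫ ∂μ = Real.cos ⟪x, u⟫ * m := by
  have hint : Integrable (fun w => Complex.exp (⟪x, u⟫ * Complex.I) *
      Complex.exp (⟪w, u⟫ * Complex.I)) μ := (integrable_cexp_inner_mul_I u).const_mul _
  calc ∫ w, Real.cos ⟪x + w, u⟫ ∂μ
      = ∫ w, (Complex.exp (⟪x, u⟫ * Complex.I) * Complex.exp (⟪w, u⟫ * Complex.I)).re ∂μ := by
        simp only [← Complex.exp_add, ← add_mul, ← Complex.ofReal_add, Complex.exp_ofReal_mul_I_re,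
          inner_add_left]
    _ = (Complex.exp (⟪x, u⟫ * Complex.I) * charFun μ u).re := by
        rw [charFun_apply, ← integral_const_mul]
        exact integral_re hint
    _ = Real.cos ⟪x, u⟫ * m := by
        rw [hm, Complex.re_mul_ofReal, Complex.exp_ofReal_mul_I_re]

theorem integral_cos_mul_mul_of_charFun_eq [IsFiniteMeasure μ] {m : V → ℝ}
    (hm : ∀ u, charFun μ u = m u) {g : V → ℝ} (hg : Integrable g) (x : V) :
    ∫ u, Real.cos ⟪x, u⟫ * (g u * m u) = ∫ w, (∫ u, Real.cos ⟪x + w, u⟫ * g u) ∂μ := by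
  rw [integral_integral_swap]
  · refine integral_congr_ae (.of_forall fun u => ?_)
    beta_reduce
    rw [integral_mul_const, integral_cos_inner_add_of_charFun_eq (hm u)]
    ring
  · refine ((integrable_const (1 : ℝ)).mul_prod hg.norm).mono' ?_ (.of_forall fun p => ?_)
    · have := hg.1.comp_snd (μ := μ)
      exact AEStronglyMeasurable.mul (by fun_prop) this
    · rw [Function.uncurry_def, norm_mul]
      gcongr
      exact Real.abs_cos_le_one _

theorem integral_translate_mul_integral_translate {G : Type*} [AddCommGroup G]
    [MeasurableSpace G] [MeasurableAdd₂ G] [MeasurableNeg G] {μ ν : Measure G} [IsFiniteMeasure μ]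
    [SFinite ν] [ν.IsAddLeftInvariant] {φ : G → ℝ} {M : ℝ} (hφ : Measurable φ)
    (hM : ∀ x, |φ x| ≤ M) {q : G → ℝ} (hq : Integrable q ν) (x : G) :
    ∫ y, φ (x + y) * ∫ w, q (y + w) ∂μ ∂ν = ∫ y, (∫ w, φ (x + y - w) ∂μ) * q y ∂ν := by
  have hint : Integrable (fun p : G × G => φ (x + p.2 - p.1) * q p.2) (μ.prod ν) :=
    ((integrable_const M).mul_prod hq.norm).mono'
      ((Measurable.aestronglyMeasurable (by fun_prop)).mul hq.1.comp_snd)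
      (.of_forall fun p => by rw [norm_mul]; gcongr; exact hM _)
  have hint' : Integrable (fun p : G × G => φ (x + p.2) * q (p.2 + p.1)) (μ.prod ν) := by
    refine ((measurePreserving_prod_add μ ν).integrable_comp_of_integrable hint).congr
      (.of_forall fun p => ?_)
    simp [add_comm p.1, ← add_assoc]
  calc ∫ y, φ (x + y) * ∫ w, q (y + w) ∂μ ∂ν
      = ∫ w, ∫ y, φ (x + y) * q (y + w) ∂ν ∂μ := by
        simp only [← integral_const_mul]
        exact integral_integral_swap hint'.swap
    _ = ∫ w, ∫ y, φ (x + y - w) * q y ∂ν ∂μ := by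
        refine integral_congr_ae (.of_forall fun w => ?_)
        simpa only [← add_assoc, add_sub_cancel_right] using
          integral_add_right_eq_self (μ := ν) (fun y => φ (x + y - w) * q y) w
    _ = ∫ y, (∫ w, φ (x + y - w) ∂μ) * q y ∂ν := by
        rw [integral_integral_swap hint]
        simp only [integral_mul_const]

end Mixture

section Dilation

variable {V : Type*} [NormedAddCommGroup V] [InnerProductSpace ℝ V] [FiniteDimensional ℝ V]
  [MeasurableSpace V] [BorelSpace V]

theorem integral_cos_mul_comp_smul (g : V → ℝ) {r : ℝ} (hr : 0 < r) (x : V) :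
    ∫ u, Real.cos ⟪x, u⟫ * g (r • u) =
      (r ^ Module.finrank ℝ V)⁻¹ * ∫ u, Real.cos ⟪r⁻¹ • x, u⟫ * g u := by
  rw [← smul_eq_mul, ← Measure.integral_comp_smul_of_nonneg volume _ r (hR := hr.le)]
  simp only [real_inner_smul_left, real_inner_smul_right, mul_inv_cancel_left₀ hr.ne']

theorem integral_translate_mul_integral_dilation {μ ν : Measure V} [IsFiniteMeasure μ]
    [ν.IsAddHaarMeasure] {φ : V → ℝ} {M : ℝ} (hφ : Measurable φ) (hM : ∀ x, |φ x| ≤ M)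
    {q : V → ℝ} (hq : Integrable q ν) {r : ℝ} (hr : 0 < r) (x : V) :
    ∫ y, φ (x + y) * ∫ w, (r ^ Module.finrank ℝ V)⁻¹ * q (r⁻¹ • (y + w)) ∂μ ∂ν =
      ∫ y, (∫ w, φ (r • (r⁻¹ • x + y) - w) ∂μ) * q y ∂ν := by
  rw [integral_translate_mul_integral_translate hφ hM
    ((hq.comp_smul (inv_ne_zero hr.ne')).const_mul _)]
  simp only [mul_left_comm _ (r ^ Module.finrank ℝ V)⁻¹, integral_const_mul]
  rw [← smul_eq_mul, ← Measure.integral_comp_smul_of_nonneg ν _ r (hR := hr.le)]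
  simp only [inv_smul_smul₀ hr.ne', smul_add, smul_inv_smul₀ hr.ne']

end Dilation

section LevySemigroup

/-- The density at time `t` of the pure-jump Lévy process with symmetric Lévy measure `ν`, as the
inverse Fourier transform of `exp (-t ψ)`, `ψ = levyExponent ν`; it is the density only when
`exp (-t ψ)` is integrable. -/
noncomputable def levyDensity {V : Type*} [NormedAddCommGroup V] [InnerProductSpace ℝ V]
    [FiniteDimensional ℝ V] [MeasurableSpace V] [BorelSpace V] (ν : Measure V) (t : ℝ) (x : V) :
    ℝ :=
  ((2 * Real.pi) ^ Module.finrank ℝ V)⁻¹ *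
    ∫ u, Real.cos ⟪x, u⟫ * Real.exp (-(t * levyExponent ν u))

/-- The transition semigroup `φ ↦ E[φ(x + L_t)]` of the pure-jump Lévy process `L` with symmetric
Lévy measure `ν`. -/
noncomputable def levySemigroup {V : Type*} [NormedAddCommGroup V] [InnerProductSpace ℝ V]
    [FiniteDimensional ℝ V] [MeasurableSpace V] [BorelSpace V] (ν : Measure V) (t : ℝ)
    (φ : V → ℝ) (x : V) : ℝ :=
  ∫ y, φ (x + y) * levyDensity ν t y

theorem contDiff_levySemigroup_and_norm_iteratedFDeriv_le {V : Type} [NormedAddCommGroup V]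
    [InnerProductSpace ℝ V] [FiniteDimensional ℝ V] [MeasurableSpace V] [BorelSpace V]
    {ν : Measure V} {t : ℝ} {p : SchwartzMap V ℝ} (hp : ∀ x, p x = levyDensity ν t x) {φ : V → ℝ}
    {M : ℝ} (hφ : Measurable φ) (hM : ∀ x, |φ x| ≤ M) (n : ℕ) :
    ContDiff ℝ n (levySemigroup ν t φ) ∧
      ∀ x, ‖iteratedFDeriv ℝ n (levySemigroup ν t φ) x‖ ≤ M * ∫ y, ‖iteratedFDeriv ℝ n p y‖ := by
  have hconv : levySemigroup ν t φ = fun x => ∫ y, φ (x + y) • p y := by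
    simp only [funext_iff, levySemigroup, hp, smul_eq_mul, implies_true]
  rw [hconv]
  exact contDiff_integral_translate_smul_and_norm_iteratedFDeriv_le hφ hM p n

variable {V : Type*} [NormedAddCommGroup V] [InnerProductSpace ℝ V] [FiniteDimensional ℝ V]
  [MeasurableSpace V] [BorelSpace V] {α R : ℝ}

theorem exists_exp_neg_levyExponent_truncatedStableMeasure_eq_mul_charFun (hα : α < 2)
    (hR : 0 < R) {T : ℝ} (hT : 0 ≤ T) {r : ℝ} (hr : 0 < r) (hr₁ : r ≤ 1) :
    ∃ (μ : Measure V) (m : V → ℝ), IsProbabilityMeasure μ ∧ (∀ u, charFun μ u = m u) ∧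
      ∀ u, Real.exp (-(T * r ^ α * levyExponent (truncatedStableMeasure V α R) u)) =
        Real.exp (-(T * levyExponent (truncatedStableMeasure V α R) (r • u))) * m u := by
  let ν := (truncatedStableMeasure V α R).restrict (closedBall 0 (r * R))ᶜ
  have : IsFiniteMeasure ν := isFiniteMeasure_restrict_compl_closedBall
    (integrable_norm_pow_truncatedStableMeasure (mod_cast hα) R) (mul_pos hr hR)
  let t : NNReal := ⟨T * r ^ α, by positivity⟩
  obtain ⟨μ, hμ, hμν⟩ := exists_charFun_eq_exp_neg_levyExponent (t • ν)
  refine ⟨μ, _, hμ, hμν, fun u => ?_⟩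
  rw [levyExponent_smul_measure, show (t : ℝ) = T * r ^ α from rfl, ← Real.exp_add,
    levyExponent_truncatedStableMeasure_eq_add_compl hα (mul_le_of_le_one_left hR.le hr₁),
    levyExponent_truncatedStableMeasure_smul hr hR.le]
  simp only [ν]
  ring_nf

theorem exists_schwartzMap_eq_exp_neg_levyExponent_truncatedStableMeasure (hα₀ : 0 < α)
    (hα₂ : α < 2) (hR : 0 < R) {T : ℝ} (hT : 0 < T) :
    ∃ g : SchwartzMap V ℝ,
      ∀ u, g u = Real.exp (-(T * levyExponent (truncatedStableMeasure V α R) u)) := by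
  obtain ⟨c, hc, hbound⟩ :=
    exists_mul_rpow_sub_le_levyExponent_truncatedStableMeasure (V := V) hα₀.le hα₂ hR
  refine exists_schwartzMap_eq_exp_neg (b := T * c)
    ((Function.HasTemperateGrowth.const T).mul
      (hasTemperateGrowth_levyExponent_truncatedStableMeasure hα₂ R)) hα₀ (mul_pos hT hc)
    fun u => ?_
  rw [mul_assoc, ← mul_sub]
  gcongr
  exact hbound u

theorem exists_schwartzMap_eq_levyDensity_truncatedStableMeasure (hα₀ : 0 < α) (hα₂ : α < 2)
    (hR : 0 < R) {T : ℝ} (hT : 0 < T) :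
    ∃ p : SchwartzMap V ℝ, ∀ x, p x = levyDensity (truncatedStableMeasure V α R) T x := by
  obtain ⟨g, hg⟩ :=
    exists_schwartzMap_eq_exp_neg_levyExponent_truncatedStableMeasure (V := V) hα₀ hα₂ hR hT
  obtain ⟨h, hgh⟩ := exists_schwartzMap_eq_integral_cos g
  refine ⟨((2 * Real.pi) ^ Module.finrank ℝ V)⁻¹ • h, fun x => ?_⟩
  simp only [levyDensity, smul_apply, hgh, hg, smul_eq_mul]

theorem exists_levyDensity_truncatedStableMeasure_mul_rpow_eq (hα₀ : 0 < α) (hα₂ : α < 2)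
    (hR : 0 < R) {T : ℝ} (hT : 0 < T) {r : ℝ} (hr : 0 < r) (hr₁ : r ≤ 1) :
    ∃ μ : Measure V, IsProbabilityMeasure μ ∧ ∀ x,
      levyDensity (truncatedStableMeasure V α R) (T * r ^ α) x =
        ∫ w, (r ^ Module.finrank ℝ V)⁻¹ *
          levyDensity (truncatedStableMeasure V α R) T (r⁻¹ • (x + w)) ∂μ := by
  obtain ⟨g, hg⟩ :=
    exists_schwartzMap_eq_exp_neg_levyExponent_truncatedStableMeasure (V := V) hα₀ hα₂ hR hT
  obtain ⟨μ, m, hμ, hμm, hm⟩ :=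
    exists_exp_neg_levyExponent_truncatedStableMeasure_eq_mul_charFun (V := V) hα₂ hR hT.le hr hr₁
  refine ⟨μ, hμ, fun x => ?_⟩
  simp only [levyDensity, hm, ← hg]
  rw [integral_cos_mul_mul_of_charFun_eq hμm (g.integrable.comp_smul hr.ne'),
    ← integral_const_mul]
  simp only [integral_cos_mul_comp_smul g hr, mul_left_comm]

theorem exists_levySemigroup_truncatedStableMeasure_mul_rpow_eq (hα₀ : 0 < α) (hα₂ : α < 2)
    (hR : 0 < R) {T : ℝ} (hT : 0 < T) {r : ℝ} (hr : 0 < r) (hr₁ : r ≤ 1) {φ : V → ℝ} {M : ℝ}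
    (hφ : Measurable φ) (hM : ∀ x, |φ x| ≤ M) :
    ∃ ψ : V → ℝ, Measurable ψ ∧ (∀ x, |ψ x| ≤ M) ∧ ∀ x,
      levySemigroup (truncatedStableMeasure V α R) (T * r ^ α) φ x =
        levySemigroup (truncatedStableMeasure V α R) T ψ (r⁻¹ • x) := by
  obtain ⟨p, hp⟩ :=
    exists_schwartzMap_eq_levyDensity_truncatedStableMeasure (V := V) hα₀ hα₂ hR hT
  obtain ⟨μ, hμ, hμp⟩ :=
    exists_levyDensity_truncatedStableMeasure_mul_rpow_eq (V := V) hα₀ hα₂ hR hT hr hr₁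
  refine ⟨fun z => ∫ w, φ (r • z - w) ∂μ, ?_, fun z => ?_, fun x => ?_⟩
  · exact (StronglyMeasurable.integral_prod_right
      (Measurable.stronglyMeasurable (by fun_prop))).measurable
  · simpa using norm_integral_le_of_norm_le_const (μ := μ)
      (f := fun w => φ (r • z - w)) (.of_forall fun w => hM _)
  · simp only [levySemigroup, hμp, ← hp]
    exact integral_translate_mul_integral_dilation hφ hM p.integrable hr x

end LevySemigroup

theorem Pt_eq_levySemigroup (d : ℕ) (α : ℝ) (φ : EuclideanSpace ℝ (Fin d) → ℝ) (t : ℝ) :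
    Pt d α φ t = levySemigroup (truncatedStableMeasure _ α 1) t φ := by
  have hPsi : Psi d α = levyExponent (truncatedStableMeasure _ α 1) := by
    funext u
    rw [levyExponent, integral_truncatedStableMeasure, finrank_euclideanSpace_fin, Psi]
    simp only [Real.rpow_neg (norm_nonneg _), div_eq_inv_mul]
  funext x
  simp only [Pt, pdens, hPsi, levySemigroup, levyDensity, neg_mul, finrank_euclideanSpace_fin]

theorem stmt_8_general {V : Type} [NormedAddCommGroup V] [InnerProductSpace ℝ V]
    [FiniteDimensional ℝ V] [MeasurableSpace V] [BorelSpace V] {α R T : ℝ} (hα₀ : 0 < α)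
    (hα₂ : α < 2) (hR : 0 < R) (hT : 0 < T) (n : ℕ) :
    ∃ C : ℝ, ∀ φ : V → ℝ, Measurable φ → ∀ M : ℝ, (∀ x, |φ x| ≤ M) → ∀ t : ℝ, 0 < t → t ≤ T →
      ContDiff ℝ n (levySemigroup (truncatedStableMeasure V α R) t φ) ∧
      ∀ x, ‖iteratedFDeriv ℝ n (levySemigroup (truncatedStableMeasure V α R) t φ) x‖ ≤
        C * M * t ^ (-(n / α)) := by
  obtain ⟨p, hp⟩ :=
    exists_schwartzMap_eq_levyDensity_truncatedStableMeasure (V := V) hα₀ hα₂ hR hT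
  refine ⟨T ^ (n / α) * ∫ y, ‖iteratedFDeriv ℝ n p y‖, fun φ hφ M hM t ht htT => ?_⟩
  obtain ⟨r, hr, hr₁, rfl⟩ : ∃ r, 0 < r ∧ r ≤ 1 ∧ T * r ^ α = t :=
    ⟨(t / T) ^ α⁻¹, by positivity, Real.rpow_le_one (by positivity) ((div_le_one hT).2 htT)
      (by positivity), by
        rw [Real.rpow_inv_rpow (by positivity) hα₀.ne', mul_div_cancel₀ _ hT.ne']⟩
  have hrn : r⁻¹ ^ n = T ^ (n / α) * (T * r ^ α) ^ (-(n / α)) := by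
    rw [Real.mul_rpow hT.le (by positivity), ← Real.rpow_mul hr.le, Real.rpow_neg hT.le,
      mul_inv_cancel_left₀ (by positivity), mul_neg, mul_div_cancel₀ _ hα₀.ne',
      Real.rpow_neg hr.le, Real.rpow_natCast, inv_pow]
  obtain ⟨ψ, hψ, hψM, hscale⟩ :=
    exists_levySemigroup_truncatedStableMeasure_mul_rpow_eq hα₀ hα₂ hR hT hr hr₁ hφ hM
  obtain ⟨hsmooth, hbound⟩ :=
    contDiff_levySemigroup_and_norm_iteratedFDeriv_le hp hψ hψM n
  rw [funext hscale]
  refine ⟨hsmooth.comp (contDiff_const_smul r⁻¹), fun x => ?_⟩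
  rw [iteratedFDeriv_comp_const_smul _ hsmooth, norm_smul, norm_pow,
    Real.norm_of_nonneg (by positivity)]
  calc _ ≤ r⁻¹ ^ n * (M * ∫ y, ‖iteratedFDeriv ℝ n p y‖) := by gcongr; exact hbound _
    _ = _ := by rw [hrn]; ring

/-- Hessian estimate `‖D²(P_t φ)‖_∞ ≤ C ‖φ‖_∞ t^{-2/α}` for bounded measurable `φ`. -/
theorem stmt_8 (d : ℕ) (hd : 2 ≤ d) (α T : ℝ) (hα1 : 1 < α) (hα2 : α < 2) (hT : 0 < T) :
    ∃ C : ℝ, ∀ φ : EuclideanSpace ℝ (Fin d) → ℝ, Measurable φ →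
      ∀ M : ℝ, (∀ x, |φ x| ≤ M) →
        ∀ t : ℝ, 0 < t → t ≤ T →
          ContDiff ℝ 2 (Pt d α φ t) ∧
          ∀ x : EuclideanSpace ℝ (Fin d),
            ‖iteratedFDeriv ℝ 2 (Pt d α φ t) x‖ ≤ C * M * t ^ (-(2 / α)) := by
  simpa only [Pt_eq_levySemigroup] using
    mod_cast stmt_8_general (V := EuclideanSpace ℝ (Fin d)) (one_pos.trans hα1) hα2 one_pos hT 2
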